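/- arXiv:2509.03700 — 10 statements merged into one kernel-verified Lean document; each statement's English description precedes it below -/
import Mathlib

section
/- Let R be a ring, V an R-module, N : V → V an R-linear endomorphism that is nilpotent, and k an integer. Then there exists a monodromy filtration of N on V centered at k, i.e. a finite increasing ℤ-indexed filtration M on V such that N maps M i into M (i−2) for every i, and such that for every natural number i the map induced by the i-th iterate N^i from the graded piece M (k+i) / M (k+i−1) to the graded piece M (k−i) / M (k−i−1) is an isomorphism. -/
/-- `IsMonodromyFiltration N k M` says that `M` is a monodromy filtration of the nilpotent
endomorphism `N` centered at `k`: a finite increasing `ℤ`-indexed filtration by submodules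
such that `N` maps `M i` into `M (i - 2)` and, for every natural number `i`, the map induced
by `N ^ i` from the graded piece `M (k + i) / M (k + i - 1)` to `M (k - i) / M (k - i - 1)`
is an isomorphism. -/
structure IsMonodromyFiltration {R V : Type*} [Ring R] [AddCommGroup V] [Module R V]
    (N : V →ₗ[R] V) (k : ℤ) (M : ℤ → Submodule R V) : Prop where
  /-- The filtration is increasing. -/
  mono : Monotone M
  /-- The filtration is exhausted below. -/
  eventually_bot : ∃ a : ℤ, ∀ i ≤ a, M i = ⊥
  /-- The filtration is exhausted above. -/
  eventually_top : ∃ b : ℤ, ∀ i, b ≤ i → M i = ⊤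
  /-- `N` maps `M i` into `M (i - 2)`. -/
  map_le : ∀ i : ℤ, (M i).map N ≤ M (i - 2)
  /-- For each `i : ℕ`, the map induced by `N ^ i` on graded pieces
  `M (k + i) / M (k + i - 1) → M (k - i) / M (k - i - 1)` is an isomorphism. -/
  graded_iso : ∀ (i : ℕ) (h1 : ∀ x ∈ M (k + i), (N ^ i) x ∈ M (k - i))
      (h2 : (M (k + i - 1)).comap (M (k + i)).subtype ≤
        ((M (k - i - 1)).comap (M (k - i)).subtype).comap ((N ^ i).restrict h1)),
      Function.Bijective
        (Submodule.mapQ ((M (k + i - 1)).comap (M (k + i)).subtype)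
          ((M (k - i - 1)).comap (M (k - i)).subtype) ((N ^ i).restrict h1) h2)

/-!
The filtration centered at `k` has the closed form `M i = ∑ⱼ Nʲ (ker N ^ (i - k + 2j + 1))`.
Applying `N ^ m` shifts the summation index by `m`, so it carries `M i` into `M (i - 2m)`; for
`i ≤ k + m` the summands of `M (i - 2m)` with `j < m` vanish, so the image is all of `M (i - 2m)`.
For `i = k + m` this is surjectivity on graded pieces. For `i = k + m - 1` moreover
`ker N ^ m ≤ M i`, so that `M i` is the full preimage of `M (i - 2m)`, which is injectivity.
-/

section

variable {R R' V V' : Type*} [Ring R] [Ring R'] [AddCommGroup V] [AddCommGroup V'] [Module R V]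
  [Module R' V'] {σ : R →+* R'} [RingHomSurjective σ]

theorem bijective_mapQ_restrict {f : V →ₛₗ[σ] V'} {P P' : Submodule R V} {Q Q' : Submodule R' V'}
    (hf : ∀ x ∈ P, f x ∈ Q) (h : P'.comap P.subtype ≤ (Q'.comap Q.subtype).comap (f.restrict hf))
    (hinj : P ⊓ Q'.comap f ≤ P') (hsurj : Q ≤ P.map f ⊔ Q') :
    Function.Bijective
      (Submodule.mapQ (P'.comap P.subtype) (Q'.comap Q.subtype) (f.restrict hf) h) := by
  constructor
  · rw [← LinearMap.ker_eq_bot]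
    refine Submodule.ker_liftQ_eq_bot _ _ _ fun x hx => hinj ⟨x.2, ?_⟩
    rwa [LinearMap.ker_comp, Submodule.ker_mkQ] at hx
  · intro q
    obtain ⟨⟨y, hy⟩, rfl⟩ := Submodule.Quotient.mk_surjective _ q
    obtain ⟨_, ⟨x, hx, rfl⟩, z, hz, hxz⟩ := Submodule.mem_sup.1 (hsurj hy)
    refine ⟨Submodule.Quotient.mk ⟨x, hx⟩, ?_⟩
    rw [Submodule.mapQ_apply, eq_comm, Submodule.Quotient.eq]
    change y - f x ∈ Q'
    rwa [← hxz, add_sub_cancel_left]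

end

section

variable {R V : Type*} [Semiring R] [AddCommMonoid V] [Module R V]

/-- The monodromy filtration of `N` centered at `k`, given by the explicit formula
`M i = ∑ⱼ Nʲ (ker N ^ (i - k + 2j + 1))`. Negative exponents are truncated to `0`, so that the
corresponding summands vanish. -/
def monodromyFiltration (N : V →ₗ[R] V) (k i : ℤ) : Submodule R V :=
  ⨆ j : ℕ, (LinearMap.ker (N ^ (i - k + 2 * j + 1).toNat)).map (N ^ j)

variable {N : V →ₗ[R] V} {k i : ℤ} {m j : ℕ}

theorem map_pow_ker_pow_eq_bot (h : m ≤ j) : (LinearMap.ker (N ^ m)).map (N ^ j) = ⊥ :=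
  LinearMap.le_ker_iff_map.1 (N.iterateKer.monotone h)

theorem map_pow_ker_pow_le_monodromyFiltration (h : m ≤ (i - k + 2 * j + 1).toNat) :
    (LinearMap.ker (N ^ m)).map (N ^ j) ≤ monodromyFiltration N k i :=
  (Submodule.map_mono (N.iterateKer.monotone h)).trans <|
    le_iSup (fun j : ℕ => (LinearMap.ker (N ^ (i - k + 2 * j + 1).toNat)).map (N ^ j)) j

theorem ker_pow_le_monodromyFiltration (h : m ≤ i - k + 1) :
    LinearMap.ker (N ^ m) ≤ monodromyFiltration N k i := by
  have hle : (LinearMap.ker (N ^ m)).map (N ^ 0) ≤ monodromyFiltration N k i :=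
    map_pow_ker_pow_le_monodromyFiltration (by omega)
  rwa [pow_zero, Module.End.one_eq_id, Submodule.map_id] at hle

theorem monotone_monodromyFiltration (N : V →ₗ[R] V) (k : ℤ) :
    Monotone (monodromyFiltration N k) := fun _ _ h =>
  iSup_le fun _ => map_pow_ker_pow_le_monodromyFiltration (by omega)

theorem map_pow_monodromyFiltration_le (N : V →ₗ[R] V) (k i : ℤ) (m : ℕ) :
    (monodromyFiltration N k i).map (N ^ m) ≤ monodromyFiltration N k (i - 2 * m) := by
  rw [monodromyFiltration, Submodule.map_iSup]
  refine iSup_le fun j => ?_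
  rw [← Submodule.map_comp, ← Module.End.mul_eq_comp, ← pow_add]
  exact map_pow_ker_pow_le_monodromyFiltration (by omega)

theorem map_pow_monodromyFiltration (h : i ≤ k + m) :
    (monodromyFiltration N k i).map (N ^ m) = monodromyFiltration N k (i - 2 * m) := by
  refine (map_pow_monodromyFiltration_le N k i m).antisymm (iSup_le fun j => ?_)
  rcases lt_or_ge j m with hj | hj
  · exact (map_pow_ker_pow_eq_bot (by omega)).trans_le bot_le
  · obtain ⟨l, rfl⟩ := Nat.exists_eq_add_of_le hj
    rw [pow_add, Module.End.mul_eq_comp, Submodule.map_comp]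
    exact Submodule.map_mono (map_pow_ker_pow_le_monodromyFiltration (by omega))

theorem monodromyFiltration_eq_bot (hm : N ^ m = 0) (h : i ≤ k - m) :
    monodromyFiltration N k i = ⊥ := by
  rw [show i = i + 2 * m - 2 * m by ring, ← map_pow_monodromyFiltration (by omega), hm,
    Submodule.map_zero]

theorem monodromyFiltration_eq_top (hm : N ^ m = 0) (h : k + m - 1 ≤ i) :
    monodromyFiltration N k i = ⊤ :=
  top_unique <| (LinearMap.ker_eq_top.2 hm).ge.trans (ker_pow_le_monodromyFiltration (by omega))

end

section

variable {R V : Type*} [Ring R] [AddCommGroup V] [Module R V] {N : V →ₗ[R] V}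

theorem comap_pow_monodromyFiltration (N : V →ₗ[R] V) (k : ℤ) (m : ℕ) :
    (monodromyFiltration N k (k - m - 1)).comap (N ^ m) = monodromyFiltration N k (k + m - 1) := by
  rw [show k - m - 1 = k + m - 1 - 2 * m by ring, ← map_pow_monodromyFiltration (by omega)]
  exact Submodule.comap_map_eq_self (ker_pow_le_monodromyFiltration (by omega))

theorem isMonodromyFiltration_monodromyFiltration (hN : IsNilpotent N) (k : ℤ) :
    IsMonodromyFiltration N k (monodromyFiltration N k) := by
  obtain ⟨n, hn⟩ := hN
  exact
    { mono := monotone_monodromyFiltration N k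
      eventually_bot := ⟨k - n, fun _ => monodromyFiltration_eq_bot hn⟩
      eventually_top := ⟨k + n - 1, fun _ => monodromyFiltration_eq_top hn⟩
      map_le := fun i => by simpa using map_pow_monodromyFiltration_le N k i 1
      graded_iso := fun m hmap hle => by
        have hsurj : (monodromyFiltration N k (k + m)).map (N ^ m) =
            monodromyFiltration N k (k - m) := by
          rw [map_pow_monodromyFiltration le_rfl, show k + m - 2 * (m : ℤ) = k - m by ring]
        exact bijective_mapQ_restrict hmap hle
          (inf_le_right.trans (comap_pow_monodromyFiltration N k m).le)
          (hsurj.ge.trans le_sup_left) }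

end

/-- Existence of the monodromy filtration centered at `k` for a nilpotent endomorphism
(Deligne, Weil II, 1.6). -/
theorem exists_monodromy_filtration {R V : Type*} [Ring R] [AddCommGroup V] [Module R V]
    (N : V →ₗ[R] V) (hN : IsNilpotent N) (k : ℤ) :
    ∃ M : ℤ → Submodule R V, IsMonodromyFiltration N k M :=
  ⟨monodromyFiltration N k, isMonodromyFiltration_monodromyFiltration hN k⟩
end

section
/- Let R be a ring, V an R-module, N : V → V a nilpotent R-linear endomorphism, and k an integer. If M and M' are both monodromy filtrations of N on V centered at k, then M i = M' i for every integer i. -/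
/-!
Write `Mₙ` for `M (k + n)`. Descending induction from the steps where the filtration is `⊤` or `⊥`
turns the graded isomorphisms into `ker Nⁿ⁺¹ ≤ Mₙ` and `Nⁿ Mₙ = M₋ₙ` for `n ≥ 0`. Hence
`Nⁿ⁺¹ Mₙ ≤ M₋ₙ₋₂ = Nⁿ⁺¹ (N Mₙ₊₂)`, which gives the recursion `Mₙ = ker Nⁿ⁺¹ + N Mₙ₊₂`. It
determines `Mₙ` for `n ≥ 0` from the top down, and `M₋ₙ = Nⁿ Mₙ` determines the other half.
-/

section Subquotient

variable {R V W : Type*} [Ring R] [AddCommGroup V] [AddCommGroup W] [Module R V] [Module R W]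
  {f : V →ₗ[R] W} {A A' : Submodule R V} {B B' : Submodule R W}

theorem injective_mapQ_restrict_iff (hf : ∀ x ∈ A, f x ∈ B)
    (hf' : A'.comap A.subtype ≤ (B'.comap B.subtype).comap (f.restrict hf)) :
    Function.Injective (Submodule.mapQ _ _ (f.restrict hf) hf') ↔ A ⊓ B'.comap f ≤ A' := by
  rw [← LinearMap.ker_eq_bot, Submodule.ker_mapQ, ← le_bot_iff, Submodule.map_le_iff_le_comap,
    ← LinearMap.ker, Submodule.ker_mkQ]
  simp [SetLike.le_def]

theorem surjective_mapQ_restrict_iff (hf : ∀ x ∈ A, f x ∈ B)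
    (hf' : A'.comap A.subtype ≤ (B'.comap B.subtype).comap (f.restrict hf)) :
    Function.Surjective (Submodule.mapQ _ _ (f.restrict hf) hf') ↔ B ≤ A.map f ⊔ B' := by
  have hmap : A.map f ≤ B := Submodule.map_le_iff_le_comap.2 hf
  rw [← LinearMap.range_eq_top, Submodule.range_mapQ, Submodule.map_mkQ_eq_top,
    LinearMap.range_restrict, ← (Submodule.map_injective_of_injective B.injective_subtype).eq_iff,
    Submodule.map_sup, Submodule.map_subtype_top, Submodule.map_comap_subtype,
    Submodule.map_comap_subtype, inf_eq_right.2 hmap, sup_comm, inf_comm,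
    ← sup_inf_assoc_of_le B' hmap, inf_eq_right]

end Subquotient

theorem map_pow_le_of_map_le {R V : Type*} [Semiring R] [AddCommMonoid V] [Module R V]
    {N : V →ₗ[R] V} {M : ℤ → Submodule R V} {d : ℤ} (h : ∀ i, (M i).map N ≤ M (i - d))
    (n : ℕ) (i : ℤ) : (M i).map (N ^ n) ≤ M (i - n * d) := by
  induction n with
  | zero => simp [Module.End.one_eq_id]
  | succ n ih =>
    calc (M i).map (N ^ (n + 1)) = ((M i).map (N ^ n)).map N := by
          rw [pow_succ', Module.End.mul_eq_comp, Submodule.map_comp]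
      _ ≤ (M (i - n * d)).map N := Submodule.map_mono ih
      _ ≤ M (i - n * d - d) := h _
      _ = M (i - (n + 1 : ℕ) * d) := by congr 1; push_cast; ring

namespace IsMonodromyFiltration

variable {R V : Type*} [Ring R] [AddCommGroup V] [Module R V] {N : V →ₗ[R] V} {k : ℤ}
  {M M' : ℤ → Submodule R V}

theorem map_pow_le (hM : IsMonodromyFiltration N k M) (n : ℕ) {i j : ℤ} (hij : i - n * 2 ≤ j) :
    (M i).map (N ^ n) ≤ M j :=
  (map_pow_le_of_map_le hM.map_le n i).trans (hM.mono hij)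

theorem inf_comap_pow_le_and_le_map_pow_sup (hM : IsMonodromyFiltration N k M) (n : ℕ) :
    M (k + n) ⊓ (M (k - n - 1)).comap (N ^ n) ≤ M (k + n - 1) ∧
      M (k - n) ≤ (M (k + n)).map (N ^ n) ⊔ M (k - n - 1) := by
  have hmem : ∀ x ∈ M (k + n), (N ^ n) x ∈ M (k - n) :=
    Submodule.map_le_iff_le_comap.1 (hM.map_pow_le n (by lia))
  have hcomap : (M (k + n - 1)).comap (M (k + n)).subtype ≤
      ((M (k - n - 1)).comap (M (k - n)).subtype).comap ((N ^ n).restrict hmem) :=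
    Submodule.comap_mono (f := (M (k + n)).subtype) <|
      Submodule.map_le_iff_le_comap.1 (hM.map_pow_le n (by lia))
  exact (hM.graded_iso n hmem hcomap).imp (injective_mapQ_restrict_iff hmem hcomap).1
    (surjective_mapQ_restrict_iff hmem hcomap).1

theorem exists_forall_gt_eq_top (hM : IsMonodromyFiltration N k M) :
    ∃ n : ℕ, ∀ m > n, M (k + m) = ⊤ := by
  obtain ⟨b, hb⟩ := hM.eventually_top
  exact ⟨(b - k).toNat, fun m hm ↦ hb _ (by lia)⟩

theorem exists_forall_gt_eq_bot (hM : IsMonodromyFiltration N k M) :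
    ∃ n : ℕ, ∀ m > n, M (k - m) = ⊥ := by
  obtain ⟨a, ha⟩ := hM.eventually_bot
  exact ⟨(k - a).toNat, fun m hm ↦ ha _ (by lia)⟩

theorem ker_pow_succ_le (hM : IsMonodromyFiltration N k M) (n : ℕ) :
    LinearMap.ker (N ^ (n + 1)) ≤ M (k + n) := by
  induction n using Nat.strong_decreasing_induction with
  | base => exact hM.exists_forall_gt_eq_top.imp fun _ h m hm ↦ le_top.trans_eq (h m hm).symm
  | step n ih =>
    have hker : LinearMap.ker (N ^ (n + 1)) ≤ M (k + (n + 1 : ℕ)) :=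
      (N.iterateKer.monotone n.succ.le_succ).trans (ih (n + 1) n.lt_succ_self)
    calc LinearMap.ker (N ^ (n + 1))
        ≤ M (k + (n + 1 : ℕ)) ⊓ (M (k - (n + 1 : ℕ) - 1)).comap (N ^ (n + 1)) :=
          le_inf hker (Submodule.comap_mono bot_le)
      _ ≤ M (k + (n + 1 : ℕ) - 1) := (hM.inf_comap_pow_le_and_le_map_pow_sup (n + 1)).1
      _ = M (k + n) := by congr 1; lia

theorem map_pow_eq (hM : IsMonodromyFiltration N k M) (n : ℕ) :
    (M (k + n)).map (N ^ n) = M (k - n) := by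
  refine (hM.map_pow_le n (by lia)).antisymm ?_
  induction n using Nat.strong_decreasing_induction with
  | base => exact hM.exists_forall_gt_eq_bot.imp fun _ h m hm ↦ (h m hm).trans_le bot_le
  | step n ih =>
    have hlower : M (k - n - 1) ≤ (M (k + n)).map (N ^ n) := calc
      M (k - n - 1) = M (k - (n + 1 : ℕ)) := by congr 1; lia
      _ ≤ (M (k + (n + 1 : ℕ))).map (N ^ (n + 1)) := ih (n + 1) n.lt_succ_self
      _ = ((M (k + (n + 1 : ℕ))).map N).map (N ^ n) := by
        rw [pow_succ, Module.End.mul_eq_comp, Submodule.map_comp]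
      _ ≤ (M (k + n)).map (N ^ n) :=
        Submodule.map_mono ((hM.map_le _).trans (hM.mono (by lia)))
    exact (hM.inf_comap_pow_le_and_le_map_pow_sup n).2.trans (sup_le le_rfl hlower)

theorem eq_map_sup_ker_pow (hM : IsMonodromyFiltration N k M) (n : ℕ) :
    M (k + n) = (M (k + (n + 2 : ℕ))).map N ⊔ LinearMap.ker (N ^ (n + 1)) := by
  refine le_antisymm ((LinearMap.map_le_map_iff (N ^ (n + 1))).1 ?_)
    (sup_le ((hM.map_le _).trans (hM.mono (by lia))) (hM.ker_pow_succ_le n))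
  calc (M (k + n)).map (N ^ (n + 1)) ≤ M (k - (n + 2 : ℕ)) := hM.map_pow_le _ (by lia)
    _ = (M (k + (n + 2 : ℕ))).map (N ^ (n + 2)) := (hM.map_pow_eq _).symm
    _ = ((M (k + (n + 2 : ℕ))).map N).map (N ^ (n + 1)) := by
      rw [pow_succ, Module.End.mul_eq_comp, Submodule.map_comp]

theorem apply_add_natCast_eq (hM : IsMonodromyFiltration N k M)
    (hM' : IsMonodromyFiltration N k M') (n : ℕ) : M (k + n) = M' (k + n) := by
  induction n using Nat.strong_decreasing_induction with
  | base =>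
    obtain ⟨a, ha⟩ := hM.exists_forall_gt_eq_top
    obtain ⟨b, hb⟩ := hM'.exists_forall_gt_eq_top
    exact ⟨max a b, fun m hm ↦ (ha m (by lia)).trans (hb m (by lia)).symm⟩
  | step n ih =>
    rw [hM.eq_map_sup_ker_pow, hM'.eq_map_sup_ker_pow, ih (n + 2) (by lia)]

end IsMonodromyFiltration

/-- Uniqueness of the monodromy filtration centered at `k` (Deligne, Weil II, 1.6). -/
theorem monodromy_filtration_unique {R V : Type*} [Ring R] [AddCommGroup V] [Module R V]
    (N : V →ₗ[R] V) (hN : IsNilpotent N) (k : ℤ) (M M' : ℤ → Submodule R V)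
    (hM : IsMonodromyFiltration N k M) (hM' : IsMonodromyFiltration N k M') :
    ∀ i : ℤ, M i = M' i := by
  intro i
  obtain ⟨n, hn⟩ := (i - k).eq_nat_or_neg
  obtain rfl | rfl : i = k + n ∨ i = k - n := by lia
  · exact hM.apply_add_natCast_eq hM' n
  · rw [← hM.map_pow_eq, ← hM'.map_pow_eq, hM.apply_add_natCast_eq hM']
end

section
/- Let R be a ring, V an R-module, N : V → V an R-linear endomorphism with N^m = 0 for some natural number m ≥ 1, k an integer, and M a monodromy filtration of N on V centered at k. Then M (k+m−1) = ⊤ and M (k−m) = ⊥. -/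
/-!
Over the indices `k + i` and `k - i` with `i ≥ m`, the isomorphism of graded pieces is induced by
`N ^ i = 0`, so both pieces vanish. Hence `M` is constant on `[k + m - 1, ∞)` and on
`(-∞, k - m]`, and since `M` is finite the constant values are `⊤` and `⊥`.
-/

namespace IsMonodromyFiltration

variable {R V : Type*} [Ring R] [AddCommGroup V] [Module R V]
  {N : V →ₗ[R] V} {k : ℤ} {M : ℤ → Submodule R V}

theorem pow_apply_mem (hM : IsMonodromyFiltration N k M) (i : ℕ) {a b : ℤ}
    (hab : a - 2 * i ≤ b) {x : V} (hx : x ∈ M a) : (N ^ i) x ∈ M b := by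
  induction i generalizing b with
  | zero => exact hM.mono (by simpa using hab) hx
  | succ i ih =>
    have h_pow : (N ^ i) x ∈ M (b + 2) := ih (by push_cast at hab; lia)
    rw [pow_succ', Module.End.mul_apply]
    simpa using hM.map_le (b + 2) (Submodule.mem_map_of_mem h_pow)

theorem comap_le_comap_restrict_pow (hM : IsMonodromyFiltration N k M) (i : ℕ) :
    (M (k + i - 1)).comap (M (k + i)).subtype ≤
      ((M (k - i - 1)).comap (M (k - i)).subtype).comap
        ((N ^ i).restrict fun _ ↦ hM.pow_apply_mem i (by lia)) :=
  fun _ ↦ hM.pow_apply_mem i (by lia)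

theorem bijective_mapQ_pow (hM : IsMonodromyFiltration N k M) (i : ℕ) :
    Function.Bijective
      (Submodule.mapQ ((M (k + i - 1)).comap (M (k + i)).subtype)
        ((M (k - i - 1)).comap (M (k - i)).subtype)
        ((N ^ i).restrict fun _ ↦ hM.pow_apply_mem i (by lia))
        (hM.comap_le_comap_restrict_pow i)) :=
  hM.graded_iso i _ _

theorem mem_sub_one_of_pow_apply_mem (hM : IsMonodromyFiltration N k M) {i : ℕ} {x : V}
    (hx : x ∈ M (k + i)) (hNx : (N ^ i) x ∈ M (k - i - 1)) : x ∈ M (k + i - 1) := by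
  have h_zero := (injective_iff_map_eq_zero _).1 (hM.bijective_mapQ_pow i).injective
    (Submodule.Quotient.mk ⟨x, hx⟩) ((Submodule.Quotient.mk_eq_zero _).2 hNx)
  rwa [Submodule.Quotient.mk_eq_zero] at h_zero

theorem exists_sub_pow_apply_mem (hM : IsMonodromyFiltration N k M) {i : ℕ} {y : V}
    (hy : y ∈ M (k - i)) : ∃ x ∈ M (k + i), y - (N ^ i) x ∈ M (k - i - 1) := by
  obtain ⟨q, hq⟩ := (hM.bijective_mapQ_pow i).surjective (Submodule.Quotient.mk ⟨y, hy⟩)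
  obtain ⟨x, rfl⟩ := Submodule.Quotient.mk_surjective _ q
  rw [eq_comm, Submodule.mapQ_apply, Submodule.Quotient.eq] at hq
  exact ⟨x, x.2, hq⟩

theorem apply_add_le_of_pow_eq_zero (hM : IsMonodromyFiltration N k M) {i : ℕ}
    (hN : N ^ i = 0) : M (k + i) ≤ M (k + i - 1) :=
  fun _ hx ↦ hM.mem_sub_one_of_pow_apply_mem hx (by simp [hN])

theorem apply_sub_le_of_pow_eq_zero (hM : IsMonodromyFiltration N k M) {i : ℕ}
    (hN : N ^ i = 0) : M (k - i) ≤ M (k - i - 1) := by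
  intro y hy
  obtain ⟨x, -, hyx⟩ := hM.exists_sub_pow_apply_mem hy
  simpa [hN] using hyx

theorem antitoneOn_Ici_of_pow_eq_zero (hM : IsMonodromyFiltration N k M) {m : ℕ}
    (hN : N ^ m = 0) : AntitoneOn M (Set.Ici (k + m - 1)) := by
  refine antitoneOn_of_succ_le Set.ordConnected_Ici fun a _ ha _ ↦ ?_
  rw [Set.mem_Ici] at ha
  obtain ⟨i, hi⟩ := Int.eq_ofNat_of_zero_le (show 0 ≤ a + 1 - k by lia)
  obtain rfl : a = k + i - 1 := by lia
  simpa using hM.apply_add_le_of_pow_eq_zero (pow_eq_zero_of_le (show m ≤ i by lia) hN)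

theorem antitoneOn_Iic_of_pow_eq_zero (hM : IsMonodromyFiltration N k M) {m : ℕ}
    (hN : N ^ m = 0) : AntitoneOn M (Set.Iic (k - m)) := by
  refine antitoneOn_of_le_pred Set.ordConnected_Iic fun a _ ha _ ↦ ?_
  rw [Set.mem_Iic] at ha
  obtain ⟨i, hi⟩ := Int.eq_ofNat_of_zero_le (show 0 ≤ k - a by lia)
  obtain rfl : a = k - i := by lia
  exact hM.apply_sub_le_of_pow_eq_zero (pow_eq_zero_of_le (show m ≤ i by lia) hN)

end IsMonodromyFiltration

/-- Finiteness of the monodromy filtration in terms of the nilpotency index: if `N ^ m = 0`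
with `m ≥ 1`, then the monodromy filtration centered at `k` satisfies `M (k + m - 1) = ⊤`
and `M (k - m) = ⊥`. -/
theorem monodromy_filtration_top_bot {R V : Type*} [Ring R] [AddCommGroup V] [Module R V]
    (N : V →ₗ[R] V) (m : ℕ) (hm : 1 ≤ m) (hN : N ^ m = 0) (k : ℤ)
    (M : ℤ → Submodule R V) (hM : IsMonodromyFiltration N k M) :
    M (k + m - 1) = ⊤ ∧ M (k - m) = ⊥ := by
  obtain ⟨a, ha⟩ := hM.eventually_bot
  obtain ⟨b, hb⟩ := hM.eventually_top
  constructor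
  · rw [← top_le_iff, ← hb _ (le_max_right (k + m - 1) b)]
    exact hM.antitoneOn_Ici_of_pow_eq_zero hN Set.self_mem_Ici (Set.mem_Ici.2 (le_max_left _ _))
      (le_max_left _ _)
  · rw [← le_bot_iff, ← ha _ (min_le_right (k - m) a)]
    exact hM.antitoneOn_Iic_of_pow_eq_zero hN (Set.mem_Iic.2 (min_le_left _ _)) Set.self_mem_Iic
      (min_le_left _ _)
end

section
/- Let R be a ring, V an R-module, N : V → V a nilpotent R-linear endomorphism, k an integer, and M a monodromy filtration of N on V centered at k. Then the kernel of N is contained in M k. (This is the abstract form of the statement in Section 3.2(i) of the paper: with respect to the monodromy filtration centered at k, the kernel of N has weights at most k.) -/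
theorem le_of_forall_inf_succ_le {ι α : Type*} [LinearOrder ι] [SuccOrder ι] [IsSuccArchimedean ι]
    [CompleteLattice α] [IsCompactlyGenerated α] {f : ι → α} (hf : Monotone f) {a : α}
    (ha : a ≤ ⨆ i, f i) {m : ι} (h : ∀ i, m ≤ i → a ⊓ f (Order.succ i) ≤ f i) :
    a ≤ f m := by
  have descend (i : ι) (hi : m ≤ i) : a ⊓ f i ≤ f m := by
    induction hi using Succ.rec with
    | rfl => exact inf_le_right
    | succ i hi ih => exact (le_inf inf_le_left (h i hi)).trans ih
  calc
    a = ⨆ i, a ⊓ f i := by rw [← hf.directed_le.inf_iSup_eq, inf_eq_left.2 ha]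
    _ ≤ f m := iSup_le fun i ↦ (le_total m i).elim (descend i) fun hi ↦ inf_le_right.trans (hf hi)

theorem le_comap_pow_of_map_le_sub {R V : Type*} [Semiring R] [AddCommMonoid V] [Module R V]
    {N : V →ₗ[R] V} {M : ℤ → Submodule R V} {d : ℤ} (h : ∀ i, (M i).map N ≤ M (i - d))
    (n : ℕ) (i : ℤ) : M i ≤ (M (i - n * d)).comap (N ^ n) := by
  induction n with
  | zero => simp [Module.End.one_eq_id]
  | succ n ih =>
    intro x hx
    have hNx : N ((N ^ n) x) ∈ M (i - n * d - d) := h _ (Submodule.mem_map_of_mem (ih hx))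
    rw [Submodule.mem_comap, pow_succ', Module.End.mul_apply]
    convert hNx using 2
    push_cast
    ring

section Ring

variable {R V : Type*} [Ring R] [AddCommGroup V] [Module R V]

theorem mapQ_injective_iff {W : Type*} [AddCommGroup W] [Module R W]
    {p : Submodule R V} {q : Submodule R W} {f : V →ₗ[R] W} {h : p ≤ q.comap f} :
    Function.Injective (p.mapQ q f h) ↔ q.comap f ≤ p := by
  rw [← LinearMap.ker_eq_bot, Submodule.ker_mapQ, eq_bot_iff, Submodule.map_le_iff_le_comap,
    Submodule.comap_bot, Submodule.ker_mkQ]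

namespace IsMonodromyFiltration

variable {N : V →ₗ[R] V} {k : ℤ} {M : ℤ → Submodule R V}

theorem iSup_eq_top (hM : IsMonodromyFiltration N k M) : ⨆ i, M i = ⊤ := by
  obtain ⟨b, hb⟩ := hM.eventually_top
  exact top_unique ((hb b le_rfl).ge.trans (le_iSup M b))

theorem inf_comap_pow_le (hM : IsMonodromyFiltration N k M) (n : ℕ) :
    M (k + n) ⊓ (M (k - n - 1)).comap (N ^ n) ≤ M (k + n - 1) := by
  have hmaps : M (k + n) ≤ (M (k - n)).comap (N ^ n) := by
    convert le_comap_pow_of_map_le_sub hM.map_le n (k + n) using 3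
    ring
  have hmaps_pred : M (k + n - 1) ≤ (M (k - n - 1)).comap (N ^ n) := by
    convert le_comap_pow_of_map_le_sub hM.map_le n (k + n - 1) using 3
    ring
  rintro x ⟨hx, hNx⟩
  have hgr := mapQ_injective_iff.1 (hM.graded_iso n hmaps fun _ hy ↦ hmaps_pred hy).injective
  exact hgr (x := ⟨x, hx⟩) hNx

end IsMonodromyFiltration

/-- `hgr` is injectivity of `N ^ n : Gr_{k+n} → Gr_{k-n}`, in the quotient-free form of
`mapQ_injective_iff`. -/
theorem ker_le_monodromy_filtration_general (N : V →ₗ[R] V) (k : ℤ) (M : ℤ → Submodule R V)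
    (hM : Monotone M) (hM_top : ⨆ i, M i = ⊤)
    (hgr : ∀ n : ℕ, M (k + n) ⊓ (M (k - n - 1)).comap (N ^ n) ≤ M (k + n - 1)) (n : ℕ) :
    LinearMap.ker (N ^ (n + 1)) ≤ M (k + n) := by
  refine le_of_forall_inf_succ_le hM (hM_top ▸ le_top) fun i hi ↦ ?_
  obtain ⟨j, rfl⟩ : ∃ j : ℕ, i = k + j := ⟨(i - k).toNat, by lia⟩
  rintro x ⟨hNx, hx⟩
  have hNx' : (N ^ (j + 1)) x = 0 := Module.End.pow_map_zero_of_le (by lia) hNx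
  have hx' : x ∈ M (k + (j + 1 : ℕ)) := by simpa [add_assoc] using hx
  have hdescend := hgr (j + 1) ⟨hx', by simp [hNx']⟩
  simpa [← add_assoc] using hdescend

end Ring

/-- With respect to the monodromy filtration centered at `k`, the kernel of `N` has weights
at most `k`: `ker N ≤ M k`. -/
theorem ker_le_monodromy_filtration {R V : Type*} [Ring R] [AddCommGroup V] [Module R V]
    (N : V →ₗ[R] V) (hN : IsNilpotent N) (k : ℤ)
    (M : ℤ → Submodule R V) (hM : IsMonodromyFiltration N k M) :
    LinearMap.ker N ≤ M k := by
  simpa using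
    ker_le_monodromy_filtration_general N k M hM.mono hM.iSup_eq_top hM.inf_comap_pow_le 0
end

section
/- Let R be a ring, V an R-module, N : V → V a nilpotent R-linear endomorphism, k an integer, and M a monodromy filtration of N on V centered at k. Then M (k−1) is contained in the range of N. (This is the abstract form of the statement in Section 3.2(ii) of the paper: with respect to the monodromy filtration centered at k, the cokernel of N : V → V(−1) has weights at least k+2, where the Tate twist shifts the filtration up by 2.) -/
/-!
The graded isomorphism `N ^ n : Gr (k + n) → Gr (k - n)` is in particular surjective, so
`M (k - n) ≤ M (k - n - 1) ⊔ range (N ^ n)`. As the ranges of the powers of `N` decrease and `M`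
vanishes in low degrees, descending induction on `n` removes the first term on the right.
-/

theorem le_of_le_succ_sup_of_antitone {α : Type*} [SemilatticeSup α] {F G : ℕ → α}
    (hG : Antitone G) (hFG : ∀ n, F n ≤ F (n + 1) ⊔ G n) {n m : ℕ} (hnm : n ≤ m)
    (hm : F m ≤ G m) : F n ≤ G n := by
  induction hnm using Nat.decreasingInduction with
  | self => exact hm
  | of_succ n _ ih => exact (hFG n).trans (sup_le (ih.trans (hG n.le_succ)) le_rfl)

theorem map_pow_le_add_nsmul {ι R V : Type*} [AddMonoid ι] [Semiring R] [AddCommMonoid V]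
    [Module R V] {f : Module.End R V} {M : ι → Submodule R V} {d : ι}
    (hf : ∀ i, (M i).map f ≤ M (i + d)) (n : ℕ) (i : ι) :
    (M i).map (f ^ n) ≤ M (i + n • d) := by
  induction n with
  | zero => simp [Module.End.one_eq_id]
  | succ n ih =>
    calc (M i).map (f ^ (n + 1)) = ((M i).map (f ^ n)).map f := by
          rw [pow_succ', Module.End.mul_eq_comp, Submodule.map_comp]
      _ ≤ (M (i + n • d)).map f := Submodule.map_mono ih
      _ ≤ M (i + n • d + d) := hf _
      _ = M (i + (n + 1) • d) := by rw [succ_nsmul, add_assoc]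

theorem le_sup_map_of_mapQ_restrict_surjective {R V W : Type*} [Ring R] [AddCommGroup V]
    [Module R V] [AddCommGroup W] [Module R W] {f : V →ₗ[R] W} {p p' : Submodule R V}
    {q q' : Submodule R W} (hpq : ∀ x ∈ p, f x ∈ q)
    (hpq' : p'.comap p.subtype ≤ (q'.comap q.subtype).comap (f.restrict hpq))
    (hsurj : Function.Surjective
      (Submodule.mapQ (p'.comap p.subtype) (q'.comap q.subtype) (f.restrict hpq) hpq')) :
    q ≤ q' ⊔ p.map f := by
  intro x hx
  obtain ⟨y, hy⟩ := hsurj.comp (Submodule.mkQ_surjective _) (Submodule.Quotient.mk ⟨x, hx⟩)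
  have hsub : x - f y ∈ q' := (Submodule.Quotient.eq (q'.comap q.subtype)).mp hy.symm
  exact Submodule.mem_sup.mpr
    ⟨x - f y, hsub, f y, Submodule.mem_map_of_mem y.2, sub_add_cancel x (f y)⟩

section

variable {R V : Type*} [Ring R] [AddCommGroup V] [Module R V] {N : V →ₗ[R] V} {k : ℤ}
  {M : ℤ → Submodule R V}

theorem IsMonodromyFiltration.pow_apply_mem_s5 (hM : IsMonodromyFiltration N k M) (n : ℕ)
    {i j : ℤ} (hij : i - 2 * n = j) {x : V} (hx : x ∈ M i) : (N ^ n) x ∈ M j := by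
  have hmem : (N ^ n) x ∈ M (i + n • (-2)) :=
    map_pow_le_add_nsmul hM.map_le n i (Submodule.mem_map_of_mem hx)
  rwa [show i + n • (-2 : ℤ) = j by rw [nsmul_eq_mul]; lia] at hmem

theorem IsMonodromyFiltration.le_sup_range_pow (hM : IsMonodromyFiltration N k M) (n : ℕ) :
    M (k - n) ≤ M (k - n - 1) ⊔ LinearMap.range (N ^ n) := by
  have hmaps : ∀ x ∈ M (k + n), (N ^ n) x ∈ M (k - n) :=
    fun _ hx => hM.pow_apply_mem_s5 n (by ring) hx
  have hmaps_pred : (M (k + n - 1)).comap (M (k + n)).subtype ≤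
      ((M (k - n - 1)).comap (M (k - n)).subtype).comap ((N ^ n).restrict hmaps) :=
    fun _ hx => hM.pow_apply_mem_s5 n (by ring) hx
  have hsurj := (hM.graded_iso n hmaps hmaps_pred).surjective
  calc M (k - n) ≤ M (k - n - 1) ⊔ (M (k + n)).map (N ^ n) :=
        le_sup_map_of_mapQ_restrict_surjective hmaps hmaps_pred hsurj
    _ ≤ M (k - n - 1) ⊔ LinearMap.range (N ^ n) := sup_le_sup_left LinearMap.map_le_range _

theorem monodromy_filtration_le_range_general (hM : IsMonodromyFiltration N k M) (n : ℕ) :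
    M (k - n) ≤ LinearMap.range (N ^ n) := by
  obtain ⟨a, ha⟩ := hM.eventually_bot
  have hstep (m : ℕ) : M (k - m) ≤ M (k - (m + 1 : ℕ)) ⊔ LinearMap.range (N ^ m) := by
    simpa only [Nat.cast_succ, sub_sub] using hM.le_sup_range_pow m
  have hbot : M (k - (max n (k - a).toNat : ℕ)) = ⊥ := ha _ (by lia)
  exact le_of_le_succ_sup_of_antitone (F := fun m : ℕ => M (k - m))
    (LinearMap.iterateRange N).monotone hstep (le_max_left n _) (hbot.trans_le bot_le)

end

/-- With respect to the monodromy filtration centered at `k`, the part of the filtration of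
weight at most `k - 1` is contained in the image of `N`: `M (k - 1) ≤ range N`. -/
theorem monodromy_filtration_le_range {R V : Type*} [Ring R] [AddCommGroup V] [Module R V]
    (N : V →ₗ[R] V) (hN : IsNilpotent N) (k : ℤ)
    (M : ℤ → Submodule R V) (hM : IsMonodromyFiltration N k M) :
    M (k - 1) ≤ LinearMap.range N := by
  simpa only [Nat.cast_one, pow_one] using monodromy_filtration_le_range_general hM 1
end

section
/- Let R be a ring and let A, B, C, C', D be R-modules, where B, C and D are each equipped with an increasing ℤ-indexed filtration (denoted W in all cases). Let α : A → B, β : B → C, ν : C → C', δ : B → D be R-linear maps, with β strictly compatible with the filtrations on B and C, and δ compatible with the filtrations on B and D. Fix an integer k and assume: (1) range β = ker ν; (2) range α = ker δ; (3) ker ν ≤ W k (as submodules of C); (4) W k = ⊥ (as a submodule of D). Then ker ν = range (β ∘ α); in other words, the sequence A → C → C' given by β ∘ α followed by ν is exact at C. (This is the weight-theoretic diagram lemma underlying the proof of Proposition 1 (local invariant cycles) of the paper, where A, B, C, C', D are H^k(X_0; i^*M), H^k(X_0; i^*j_*j^*M), H^k(X_0; ψ_f^u M), H^k(X_0; ψ_f^u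 M)(−1), H^{k+1}(X_0; i^!M) with their weight filtrations, ν is the log of monodromy N, and morphisms of mixed Hodge structures are strictly compatible with weight filtrations.) -/
/-!
Strictness lifts every element of `ker ν = range β`, which has weight at most `k`, to an element
of `B` of weight at most `k`. Such a lift is killed by `δ`, because its image lies in `WD k = ⊥`,
so it comes from `A`.
-/

section

variable {R A B C : Type*} [Semiring R] [AddCommMonoid A] [Module R A] [AddCommMonoid B]
  [Module R B] [AddCommMonoid C] [Module R C] {α : A →ₗ[R] B} {β : B →ₗ[R] C}

theorem map_eq_range_of_range_inf_le_map {V : Submodule R B} {W : Submodule R C}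
    (hβ : LinearMap.range β ⊓ W ≤ V.map β) (hW : LinearMap.range β ≤ W) :
    V.map β = LinearMap.range β :=
  le_antisymm LinearMap.map_le_range ((le_inf le_rfl hW).trans hβ)

theorem range_comp_eq_range_of_map_eq_range {V : Submodule R B}
    (hβ : V.map β = LinearMap.range β) (hV : V ≤ LinearMap.range α) :
    LinearMap.range (β.comp α) = LinearMap.range β := by
  refine le_antisymm (LinearMap.range_comp_le_range α β) ?_
  calc
    LinearMap.range β = V.map β := hβ.symm
    _ ≤ (LinearMap.range α).map β := Submodule.map_mono hV
    _ = LinearMap.range (β.comp α) := (LinearMap.range_comp α β).symm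

theorem ker_eq_range_comp_of_weights_general {C' D : Type*} [AddCommMonoid C'] [Module R C']
    [AddCommMonoid D] [Module R D] {ν : C →ₗ[R] C'} {δ : B →ₗ[R] D}
    {V : Submodule R B} {W : Submodule R C}
    (hβ : LinearMap.range β ⊓ W ≤ V.map β) (hδ : V.map δ = ⊥)
    (hβν : LinearMap.range β = LinearMap.ker ν) (hαδ : LinearMap.ker δ ≤ LinearMap.range α)
    (hν : LinearMap.ker ν ≤ W) :
    LinearMap.ker ν = LinearMap.range (β.comp α) := by
  have hmap : V.map β = LinearMap.range β :=
    map_eq_range_of_range_inf_le_map hβ (hβν.trans_le hν)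
  have hV : V ≤ LinearMap.range α := (LinearMap.le_ker_iff_map.mpr hδ).trans hαδ
  exact hβν.symm.trans (range_comp_eq_range_of_map_eq_range hmap hV).symm

end

/-- Weight-theoretic diagram lemma underlying Proposition 1 (local invariant cycles):
given exact rows/columns and weight bounds, `ker ν = range (β ∘ α)`.
Here `WB`, `WC`, `WD` are increasing `ℤ`-indexed filtrations on `B`, `C`, `D`;
`β` is strictly compatible and `δ` is compatible with the filtrations. -/
theorem ker_eq_range_comp_of_weights {R A B C C' D : Type*} [Ring R]
    [AddCommGroup A] [Module R A] [AddCommGroup B] [Module R B]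
    [AddCommGroup C] [Module R C] [AddCommGroup C'] [Module R C']
    [AddCommGroup D] [Module R D]
    (WB : ℤ → Submodule R B) (WC : ℤ → Submodule R C) (WD : ℤ → Submodule R D)
    (hWB : Monotone WB) (hWC : Monotone WC) (hWD : Monotone WD)
    (α : A →ₗ[R] B) (β : B →ₗ[R] C) (ν : C →ₗ[R] C') (δ : B →ₗ[R] D)
    (hβ : ∀ i : ℤ, (WB i).map β = LinearMap.range β ⊓ WC i)
    (hδ : ∀ i : ℤ, (WB i).map δ ≤ WD i)
    (k : ℤ)
    (h1 : LinearMap.range β = LinearMap.ker ν)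
    (h2 : LinearMap.range α = LinearMap.ker δ)
    (h3 : LinearMap.ker ν ≤ WC k)
    (h4 : WD k = ⊥) :
    LinearMap.ker ν = LinearMap.range (β.comp α) :=
  ker_eq_range_comp_of_weights_general (hβ k).ge (le_bot_iff.mp ((hδ k).trans h4.le)) h1 h2.ge h3
end

section
/- Let R be a ring and let C, C', E, F, G be R-modules, where C', E and F are each equipped with an increasing ℤ-indexed filtration (denoted W in all cases). Let ν : C → C', μ : C' → E, φ : F → E, ψ : E → G be R-linear maps, with μ strictly compatible with the filtrations on C' and E, and φ compatible with the filtrations on F and E. Fix an integer k and assume: (1) range ν = ker μ; (2) range φ = ker ψ; (3) W (k+1) ≤ range ν (as submodules of C'); (4) W (k+1) = ⊤ (as a submodule of F). Then ker (ψ ∘ μ) = range ν; in other words, the sequence C → C' → G given by ν followed by ψ ∘ μ is exact at C'. (This is the weight-theoretic diagram lemma underlying the proof of Proposition 2 of the paper, where C, C', E, F, G are H^k(X_0; ψ_f^u M), H^k(X_0; ψ_f^u M)(−1), H^{k+1}(X_0; i^*j_*j^*M), H^{k+1}(X_0; i^*M), H^{k+2}(X_0; i^!M) with their weight filtrations, ν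 is the log of monodromy N, and morphisms of mixed Hodge structures are strictly compatible with weight filtrations.) -/
/-!
Over all of `F` the weights are at most `k + 1`, so `ker ψ = range φ` lies in `W (k + 1)` of `E`. By
strictness, an element of `range μ` of weight at most `k + 1` is the image of an element of
`W (k + 1)` of `C'`, which `μ` kills. Hence `range μ` and `ker ψ` meet only in `0`, and composing
with `ψ` does not enlarge the kernel of `μ`.
-/

section

variable {R₀ R₁ R₂ R₃ C C' E G : Type*} [Semiring R₀] [Semiring R₁] [Semiring R₂] [Semiring R₃]
  [AddCommMonoid C] [Module R₀ C] [AddCommMonoid C'] [Module R₁ C']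
  [AddCommMonoid E] [Module R₂ E] [AddCommMonoid G] [Module R₃ G]
  {σ₀₁ : R₀ →+* R₁} {σ₁₂ : R₁ →+* R₂} {σ₂₃ : R₂ →+* R₃} {σ₁₃ : R₁ →+* R₃}
  [RingHomSurjective σ₁₂] {μ : C' →ₛₗ[σ₁₂] E} {ψ : E →ₛₗ[σ₂₃] G}
  {P : Submodule R₁ C'} {Q : Submodule R₂ E}

theorem disjoint_range_of_inf_le_map_of_le_ker (hμ : LinearMap.range μ ⊓ Q ≤ P.map μ)
    (hP : P ≤ LinearMap.ker μ) : Disjoint (LinearMap.range μ) Q :=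
  disjoint_iff_inf_le.mpr (hμ.trans (LinearMap.le_ker_iff_map.mp hP).le)

theorem ker_comp_eq_ker_iff_disjoint [RingHomCompTriple σ₁₂ σ₂₃ σ₁₃] :
    LinearMap.ker (ψ.comp μ : C' →ₛₗ[σ₁₃] G) = LinearMap.ker μ ↔
      Disjoint (LinearMap.range μ) (LinearMap.ker ψ) := by
  rw [LinearMap.disjoint_ker, ← (LinearMap.ker_le_ker_comp μ ψ).ge_iff_eq']
  simp only [SetLike.le_def, LinearMap.mem_ker, LinearMap.comp_apply, LinearMap.mem_range,
    forall_exists_index, forall_apply_eq_imp_iff]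

theorem ker_comp_eq_range_of_weights_general [RingHomSurjective σ₀₁]
    [RingHomCompTriple σ₁₂ σ₂₃ σ₁₃] {ν : C →ₛₗ[σ₀₁] C'}
    (hν : LinearMap.range ν = LinearMap.ker μ) (hμ : LinearMap.range μ ⊓ Q ≤ P.map μ)
    (hP : P ≤ LinearMap.range ν) (hψ : LinearMap.ker ψ ≤ Q) :
    LinearMap.ker (ψ.comp μ : C' →ₛₗ[σ₁₃] G) = LinearMap.range ν := by
  have hdisj : Disjoint (LinearMap.range μ) Q :=
    disjoint_range_of_inf_le_map_of_le_ker hμ (hP.trans_eq hν)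
  rw [hν, ker_comp_eq_ker_iff_disjoint]
  exact hdisj.mono_right hψ

end

/-- Weight-theoretic diagram lemma underlying Proposition 2 of the paper:
given exact rows/columns and weight bounds, `ker (ψ ∘ μ) = range ν`.
Here `WC'`, `WE`, `WF` are increasing `ℤ`-indexed filtrations on `C'`, `E`, `F`;
`μ` is strictly compatible and `φ` is compatible with the filtrations. -/
theorem ker_comp_eq_range_of_weights {R C C' E F G : Type*} [Ring R]
    [AddCommGroup C] [Module R C] [AddCommGroup C'] [Module R C']
    [AddCommGroup E] [Module R E] [AddCommGroup F] [Module R F]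
    [AddCommGroup G] [Module R G]
    (WC' : ℤ → Submodule R C') (WE : ℤ → Submodule R E) (WF : ℤ → Submodule R F)
    (hWC' : Monotone WC') (hWE : Monotone WE) (hWF : Monotone WF)
    (ν : C →ₗ[R] C') (μ : C' →ₗ[R] E) (φ : F →ₗ[R] E) (ψ : E →ₗ[R] G)
    (hμ : ∀ i : ℤ, (WC' i).map μ = LinearMap.range μ ⊓ WE i)
    (hφ : ∀ i : ℤ, (WF i).map φ ≤ WE i)
    (k : ℤ)
    (h1 : LinearMap.range ν = LinearMap.ker μ)
    (h2 : LinearMap.range φ = LinearMap.ker ψ)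
    (h3 : WC' (k + 1) ≤ LinearMap.range ν)
    (h4 : WF (k + 1) = ⊤) :
    LinearMap.ker (ψ.comp μ) = LinearMap.range ν := by
  have hψ : LinearMap.ker ψ ≤ WE (k + 1) := by
    simpa only [h4, Submodule.map_top, h2] using hφ (k + 1)
  exact ker_comp_eq_range_of_weights_general h1 (hμ (k + 1)).ge h3 hψ
end

section
/- Let R be a ring and let C', E, C₁, C₁', G, G₂ be R-modules, where E, C₁ and G are each equipped with an increasing ℤ-indexed filtration (denoted W in all cases). Let u : C' → E, v : E → C₁, t : C₁ → C₁', φ : E → G, χ : G → G₂ be R-linear maps, with v strictly compatible with the filtrations on E and C₁, and φ compatible with the filtrations on E and G. Fix an integer k and assume: (1) ker v = range u; (2) range v ≤ ker t; (3) ker t ≤ W (k+1) (as submodules of C₁); (4) ker χ = range φ; (5) W (k+1) = ⊥ (as a submodule of G). Then ker χ = range (φ ∘ u); in other words, the sequence C' → G → G₂ given by φ ∘ u followed by χ is exact at G. (This is the weight-theoretic diagram lemma underlying the proof of Proposition 3 of the paper, where C', E, C₁, C₁', G, G₂ are H^k(X_0; ψ_f^u M)(−1), H^{k+1}(X_0;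 i^*j_*j^*M), H^{k+1}(X_0; ψ_f^u M), H^{k+1}(X_0; ψ_f^u M)(−1), H^{k+2}(X_0; i^!M), H^{k+2}(X_0; i^*M) with their weight filtrations, t is the log of monodromy N, and morphisms of mixed Hodge structures are strictly compatible with weight filtrations.) -/
/-!
Let `p = W (k + 1)` in `E`. Strictness of `v` and `range v ≤ ker t ≤ W (k + 1)` give
`v p = range v`, that is `p + ker v = E`, while `φ` vanishes on `p`, as it maps `p` into
`W (k + 1) = 0`. So all values of `φ` are already attained on `ker v = range u`.
-/

section

variable {R E F G : Type*} [Semiring R] [AddCommGroup E] [Module R E]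
  [AddCommGroup F] [Module R F] [AddCommGroup G] [Module R G]
  {v : E →ₗ[R] F} {φ : E →ₗ[R] G} {p : Submodule R E}

theorem map_ker_eq_range_of_map_eq_range_of_le_ker
    (hv : p.map v = LinearMap.range v) (hφ : p ≤ LinearMap.ker φ) :
    (LinearMap.ker v).map φ = LinearMap.range φ := by
  have hp : Codisjoint p (LinearMap.ker v) := Submodule.map_eq_range_iff.1 hv
  exact Submodule.map_eq_range_iff.2 (hp.mono_left hφ).symm

theorem ker_eq_range_comp_of_weights'_general {C H : Type*}
    [AddCommMonoid C] [Module R C] [AddCommMonoid H] [Module R H]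
    {u : C →ₗ[R] E} {χ : G →ₗ[R] H}
    (huv : LinearMap.ker v = LinearMap.range u) (hφχ : LinearMap.ker χ = LinearMap.range φ)
    (hv : p.map v = LinearMap.range v) (hφ : p ≤ LinearMap.ker φ) :
    LinearMap.ker χ = LinearMap.range (φ.comp u) :=
  calc
    LinearMap.ker χ = LinearMap.range φ := hφχ
    _ = (LinearMap.ker v).map φ := (map_ker_eq_range_of_map_eq_range_of_le_ker hv hφ).symm
    _ = (LinearMap.range u).map φ := by rw [huv]
    _ = LinearMap.range (φ.comp u) := (LinearMap.range_comp u φ).symm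

end

/-- Weight-theoretic diagram lemma underlying Proposition 3 of the paper:
given exact rows/columns and weight bounds, `ker χ = range (φ ∘ u)`.
Here `WE`, `WC₁`, `WG` are increasing `ℤ`-indexed filtrations on `E`, `C₁`, `G`;
`v` is strictly compatible and `φ` is compatible with the filtrations. -/
theorem ker_eq_range_comp_of_weights' {R C' E C₁ C₁' G G₂ : Type*} [Ring R]
    [AddCommGroup C'] [Module R C'] [AddCommGroup E] [Module R E]
    [AddCommGroup C₁] [Module R C₁] [AddCommGroup C₁'] [Module R C₁']
    [AddCommGroup G] [Module R G] [AddCommGroup G₂] [Module R G₂]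
    (WE : ℤ → Submodule R E) (WC₁ : ℤ → Submodule R C₁) (WG : ℤ → Submodule R G)
    (hWE : Monotone WE) (hWC₁ : Monotone WC₁) (hWG : Monotone WG)
    (u : C' →ₗ[R] E) (v : E →ₗ[R] C₁) (t : C₁ →ₗ[R] C₁') (φ : E →ₗ[R] G) (χ : G →ₗ[R] G₂)
    (hv : ∀ i : ℤ, (WE i).map v = LinearMap.range v ⊓ WC₁ i)
    (hφ : ∀ i : ℤ, (WE i).map φ ≤ WG i)
    (k : ℤ)
    (h1 : LinearMap.ker v = LinearMap.range u)
    (h2 : LinearMap.range v ≤ LinearMap.ker t)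
    (h3 : LinearMap.ker t ≤ WC₁ (k + 1))
    (h4 : LinearMap.ker χ = LinearMap.range φ)
    (h5 : WG (k + 1) = ⊥) :
    LinearMap.ker χ = LinearMap.range (φ.comp u) := by
  have hvW : (WE (k + 1)).map v = LinearMap.range v :=
    (hv (k + 1)).trans (inf_eq_left.2 (h2.trans h3))
  have hφW : WE (k + 1) ≤ LinearMap.ker φ :=
    LinearMap.le_ker_iff_map.2 (le_bot_iff.1 ((hφ (k + 1)).trans_eq h5))
  exact ker_eq_range_comp_of_weights'_general h1 h4 hvW hφW
end

section
/- Let R be a ring and let A, B, E, C, C₀, C₀' be R-modules, where B, C₀' and E are each equipped with an increasing ℤ-indexed filtration (denoted W in all cases). Let α : A → B, β : B → E, γ : E → C, η : C₀ → C₀', δ : C₀' → E be R-linear maps, with δ strictly compatible with the filtrations on C₀' and E, and β compatible with the filtrations on B and E. Fix an integer k and assume: (1) ker β = range α; (2) ker γ = range δ; (3) ker δ = range η; (4) W k = ⊤ (as a submodule of B); (5) W k ≤ range η (as submodules of C₀'). Then ker (γ ∘ β) = range α; in other words, the sequence A → B → C given by α followed by γ ∘ β is exact at B. (This is the weight-theoretic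 diagram lemma underlying the proof of Proposition 4 of the paper, where A, B, E, C, C₀, C₀' are H^k(X_0; i^!M), H^k(X_0; i^*M), H^k(X_0; i^*j_*j^*M), H^k(X_0; ψ_f^u M), H^{k−1}(X_0; ψ_f^u M), H^{k−1}(X_0; ψ_f^u M)(−1) with their weight filtrations, η is the log of monodromy N, and morphisms of mixed Hodge structures are strictly compatible with weight filtrations.) -/
/-!
Since `WB k = ⊤`, the image of `β` lies in `WE k`, and its intersection with `ker γ = range δ`
therefore lies in `range δ ⊓ WE k`. By strictness this is `δ (WC₀' k)`, which is zero because
`WC₀' k ≤ range η = ker δ`. So `γ` kills no nonzero element of the image of `β`.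
-/

section

open LinearMap

variable {R B E C D : Type*} [Semiring R]
  [AddCommMonoid B] [Module R B] [AddCommMonoid E] [Module R E]
  [AddCommMonoid C] [Module R C] [AddCommMonoid D] [Module R D]

theorem ker_comp_eq_ker_iff_disjoint_s9 {f : B →ₗ[R] E} {g : E →ₗ[R] C} :
    ker (g.comp f) = ker f ↔ Disjoint (range f) (ker g) := by
  rw [disjoint_ker, ← (ker_le_ker_comp f g).ge_iff_eq']
  simp only [SetLike.le_def, mem_range, forall_exists_index, forall_apply_eq_imp_iff, mem_ker,
    comp_apply]

theorem disjoint_range_of_inf_le_map {δ : D →ₗ[R] E} {S : Submodule R D} {F : Submodule R E}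
    (hstrict : range δ ⊓ F ≤ S.map δ) (hS : S ≤ ker δ) : Disjoint (range δ) F :=
  disjoint_iff_inf_le.mpr (hstrict.trans (le_ker_iff_map.mp hS).le)

theorem ker_comp_eq_range_of_weights'_general {β : B →ₗ[R] E} {γ : E →ₗ[R] C} {δ : D →ₗ[R] E}
    {S : Submodule R D} {F : Submodule R E} (hstrict : range δ ⊓ F ≤ S.map δ)
    (hβ : range β ≤ F) (hγ : ker γ ≤ range δ) (hS : S ≤ ker δ) :
    ker (γ.comp β) = ker β :=
  ker_comp_eq_ker_iff_disjoint_s9.mpr ((disjoint_range_of_inf_le_map hstrict hS).symm.mono hβ hγ)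

end

/-- Weight-theoretic diagram lemma underlying Proposition 4 of the paper:
given exact rows/columns and weight bounds, `ker (γ ∘ β) = range α`.
Here `WB`, `WC₀'`, `WE` are increasing `ℤ`-indexed filtrations on `B`, `C₀'`, `E`;
`δ` is strictly compatible and `β` is compatible with the filtrations. -/
theorem ker_comp_eq_range_of_weights' {R A B E C C₀ C₀' : Type*} [Ring R]
    [AddCommGroup A] [Module R A] [AddCommGroup B] [Module R B]
    [AddCommGroup E] [Module R E] [AddCommGroup C] [Module R C]
    [AddCommGroup C₀] [Module R C₀] [AddCommGroup C₀'] [Module R C₀']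
    (WB : ℤ → Submodule R B) (WC₀' : ℤ → Submodule R C₀') (WE : ℤ → Submodule R E)
    (hWB : Monotone WB) (hWC₀' : Monotone WC₀') (hWE : Monotone WE)
    (α : A →ₗ[R] B) (β : B →ₗ[R] E) (γ : E →ₗ[R] C) (η : C₀ →ₗ[R] C₀') (δ : C₀' →ₗ[R] E)
    (hδ : ∀ i : ℤ, (WC₀' i).map δ = LinearMap.range δ ⊓ WE i)
    (hβ : ∀ i : ℤ, (WB i).map β ≤ WE i)
    (k : ℤ)
    (h1 : LinearMap.ker β = LinearMap.range α)
    (h2 : LinearMap.ker γ = LinearMap.range δ)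
    (h3 : LinearMap.ker δ = LinearMap.range η)
    (h4 : WB k = ⊤)
    (h5 : WC₀' k ≤ LinearMap.range η) :
    LinearMap.ker (γ.comp β) = LinearMap.range α := by
  have range_β_le : LinearMap.range β ≤ WE k := by simpa only [h4, Submodule.map_top] using hβ k
  exact (ker_comp_eq_range_of_weights'_general (hδ k).ge range_β_le h2.le (h5.trans h3.ge)).trans h1
end

section
/- Let R be a ring, let E and C₁ be R-modules each equipped with an increasing ℤ-indexed filtration W, and let v : E → C₁ be an R-linear map that is strictly compatible with the filtrations. Fix an integer j and assume range v ≤ W j (as submodules of C₁). Then ker v ⊔ W j = ⊤ as submodules of E, i.e. every element of E is the sum of an element of the kernel of v and an element of W j. (This is the intermediate claim in the proof of Proposition 3 of the paper that a map of mixed Hodge structures whose image has weights at most j is zero on weights greater than j, so that exactness yields surjectivity on weights greater than j.) -/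
theorem ker_sup_filtration_eq_top_of_range_le_general {R S E C : Type*}
    [Semiring R] [Semiring S] {σ : R →+* S} [RingHomSurjective σ]
    [AddCommGroup E] [Module R E] [AddCommGroup C] [Module S C]
    {v : E →ₛₗ[σ] C} {p : Submodule R E} {q : Submodule S C}
    (hstrict : LinearMap.range v ⊓ q ≤ p.map v) (hrange : LinearMap.range v ≤ q) :
    LinearMap.ker v ⊔ p = ⊤ := by
  have hmap : p.map v = LinearMap.range v :=
    le_antisymm LinearMap.map_le_range ((le_inf le_rfl hrange).trans hstrict)
  exact (Submodule.map_eq_range_iff.mp hmap).symm.eq_top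

/-- If `v : E → C₁` is strictly compatible with increasing `ℤ`-indexed filtrations `WE`, `WC₁`
and its range is contained in `WC₁ j`, then `ker v ⊔ WE j = ⊤`: every element of `E` is the
sum of an element of the kernel of `v` and an element of `WE j`. -/
theorem ker_sup_filtration_eq_top_of_range_le {R E C₁ : Type*} [Ring R]
    [AddCommGroup E] [Module R E] [AddCommGroup C₁] [Module R C₁]
    (WE : ℤ → Submodule R E) (WC₁ : ℤ → Submodule R C₁)
    (hWE : Monotone WE) (hWC₁ : Monotone WC₁)
    (v : E →ₗ[R] C₁)
    (hv : ∀ i : ℤ, (WE i).map v = LinearMap.range v ⊓ WC₁ i)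
    (j : ℤ)
    (h : LinearMap.range v ≤ WC₁ j) :
    LinearMap.ker v ⊔ WE j = ⊤ :=
  ker_sup_filtration_eq_top_of_range_le_general (hv j).ge h
end
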